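/- Let N ≥ 2. There is no (⌊(N+1)/2⌋ − 1)-supercyclic operator on ℝ^N, and there exists a ⌊(N+1)/2⌋-supercyclic operator on ℝ^N. -/

import Mathlib

/-!
Write `m = ⌊N / 2⌋`, so that `⌊(N + 1) / 2⌋ = N - m`.

**Existence.** On `ℂ ^ m × ℝ ^ (N - 2 m)` rotate each complex coordinate by an angle `θ i` and fix
the real coordinate, if any. A Baire category argument shows that for generic `θ` the orbit of the
real subspace `ℝ ^ m × ℝ ^ (N - 2 m)`, of dimension `N - m`, is dense (`exists_angles_dense`).

**Nonexistence.** Let `A` be an invertible matrix and `E` a subspace of dimension `n < N - m`.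
By the Jordan–Chevalley decomposition and a functional calculus on the complex spectrum `S` of the
semisimple part, `A ^ k = ψ (u ^ k) R ^ k` (`exists_polar`). Here `u` carries the phases of the
eigenvalues and lies in the compact group `unimodular S` of unimodular functions on `S` that
intertwine conjugation, and the entries of `R ^ k` are combinations of sequences
`k ^ j * exp (α k)` with `α` real. Such combinations have exact orders of growth
(`expPoly_leading`), so the ratios of the maximal minors of `R ^ k` restricted to `E` to a dominant
one converge. By Cramer's rule the subspaces `R ^ k E` therefore accumulate at a single space,
the range of a matrix `Q` with `n` columns (`exists_limit_matrix`). Consequently every limit point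
of the orbit of `E` lies either in the orbit itself or in the union of the `ψ g (range Q)`,
`g ∈ unimodular S`. Non-real eigenvalues come in conjugate pairs, so `unimodular S` is covered by
finitely many smooth images of `ℝ ^ d` with `d ≤ m`. The closure of the orbit thus has Hausdorff
dimension at most `m + n < N` and is not the whole space (`not_dense_orbit`).
-/

open Matrix

/-- The 2×2 rotation matrix of angle `θ`. -/
noncomputable def rotM (θ : ℝ) : Matrix (Fin 2) (Fin 2) ℝ :=
  !![Real.cos θ, -Real.sin θ; Real.sin θ, Real.cos θ]

/-- A linear operator `T` on `ι → ℝ` is `n`-supercyclic if there is an `n`-dimensional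
subspace `E` whose orbit `⋃ k, T^k(E)` is dense. -/
def NSupercyclic {ι : Type*} [Fintype ι] (n : ℕ) (T : (ι → ℝ) →ₗ[ℝ] (ι → ℝ)) : Prop :=
  ∃ E : Submodule ℝ (ι → ℝ), Module.finrank ℝ E = n ∧
    Dense (⋃ k : ℕ, ⇑(T ^ k) '' (E : Set (ι → ℝ)))

/-! ### Generic rotations -/

open Filter Topology in
/-- For generic angles the orbit of `ℝ ^ m × ℝ ^ r` under the coordinatewise rotations of `ℂ ^ m`
is dense in `ℂ ^ m × ℝ ^ r`. For each basic open set, the angles for which some iterate meets it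
form a dense open set, and the Baire category theorem applies. -/
theorem exists_angles_dense (m r : ℕ) : ∃ θ : Fin m → ℝ,
    Dense {v : (Fin m → ℂ) × (Fin r → ℝ) | ∃ (k : ℕ) (a : Fin m → ℝ) (w : Fin r → ℝ),
      v = (fun i => Complex.exp (θ i * Complex.I) ^ k * a i, w)} := by
  let V := (Fin m → ℂ) × (Fin r → ℝ)
  let B := TopologicalSpace.countableBasis V
  have hB := TopologicalSpace.isBasis_countableBasis V
  have hBc : B.Countable := TopologicalSpace.countable_countableBasis V
  let O : Set V → Set (Fin m → ℝ) := fun U =>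
    ⋃ (k : ℕ) (a : Fin m → ℝ) (w : Fin r → ℝ),
      (fun θ : Fin m → ℝ =>
        ((fun i => Complex.exp (θ i * Complex.I) ^ k * a i, w) : V)) ⁻¹' U
  have hOo : ∀ U ∈ B, IsOpen (O U) := by
    intro U hU
    refine isOpen_iUnion fun k => isOpen_iUnion fun a => isOpen_iUnion fun w => ?_
    refine (hB.isOpen hU).preimage ?_
    fun_prop
  have hOd : ∀ U ∈ B, Dense (O U) := by
    intro U hU
    obtain ⟨⟨z, w⟩, hu⟩ := TopologicalSpace.nonempty_of_mem_countableBasis hU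
    rw [Metric.dense_iff]
    intro θ₀ ε hε
    obtain ⟨k, hk⟩ := exists_nat_gt (2 * Real.pi / ε)
    have hπ := Real.pi_pos
    have hk0 : (0 : ℝ) < k := lt_trans (by positivity) hk
    -- the solution of `k θ ≡ arg z (mod 2π)` just below `θ₀`
    let n : Fin m → ℤ := fun i => ⌊(k * θ₀ i - (z i).arg) / (2 * Real.pi)⌋
    let θ : Fin m → ℝ := fun i => ((z i).arg + 2 * Real.pi * n i) / k
    refine ⟨θ, ?_, ?_⟩
    · rw [Metric.mem_ball, dist_pi_lt_iff hε]
      intro i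
      have h1 := Int.floor_le ((k * θ₀ i - (z i).arg) / (2 * Real.pi))
      have h2 := Int.lt_floor_add_one ((k * θ₀ i - (z i).arg) / (2 * Real.pi))
      rw [le_div_iff₀ (by positivity)] at h1
      rw [div_lt_iff₀ (by positivity)] at h2
      rw [div_lt_iff₀ hε] at hk
      have h3 : θ i * k = (z i).arg + 2 * Real.pi * n i := by
        simp only [θ]; field_simp
      have h4 : (⌊(k * θ₀ i - (z i).arg) / (2 * Real.pi)⌋ : ℝ) = n i := rfl
      rw [h4] at h1 h2
      rw [Real.dist_eq, abs_lt]
      constructor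
      · refine lt_of_mul_lt_mul_right (a := (k : ℝ)) ?_ hk0.le
        nlinarith
      · refine lt_of_mul_lt_mul_right (a := (k : ℝ)) ?_ hk0.le
        nlinarith [mul_pos hε hk0]
    · simp only [O, Set.mem_iUnion]
      refine ⟨k, fun i => ‖z i‖, w, ?_⟩
      have : (fun i => Complex.exp (θ i * Complex.I) ^ k * (‖z i‖ : ℂ)) = z := by
        funext i
        rw [← Complex.exp_nat_mul]
        have : (k : ℂ) * (θ i * Complex.I)
            = (z i).arg * Complex.I + n i * (2 * Real.pi * Complex.I) := by
          simp only [θ]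
          push_cast
          have : (k : ℂ) ≠ 0 := by exact_mod_cast hk0.ne'
          field_simp
        rw [this, Complex.exp_add, Complex.exp_int_mul_two_pi_mul_I, mul_one, mul_comm,
          Complex.norm_mul_exp_arg_mul_I]
      simp only [Set.mem_preimage, this]
      exact hu
  have hD := dense_biInter_of_isOpen hOo hBc hOd
  obtain ⟨θ, hθ⟩ := hD.nonempty
  refine ⟨θ, ?_⟩
  rw [hB.dense_iff]
  intro U hU hne
  have := Set.mem_iInter₂.1 hθ U hU
  simp only [O, Set.mem_iUnion] at this
  obtain ⟨k, a, w, h⟩ := this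
  exact ⟨_, h, k, a, w, rfl⟩

/-- A product of `⌊N / 2⌋` generic plane rotations, times the identity of a line when `N` is odd, is
`⌊(N + 1) / 2⌋`-supercyclic: the subspace is the product of one real line in each factor. -/
theorem exists_nSupercyclic (N : ℕ) :
    ∃ T : (Fin N → ℝ) →ₗ[ℝ] (Fin N → ℝ), NSupercyclic ((N + 1) / 2) T := by
  obtain ⟨θ, hθ⟩ := exists_angles_dense (N / 2) (N % 2)
  generalize hm : N / 2 = m at θ hθ
  generalize hr : N % 2 = r at hθ
  have hV : Module.finrank ℝ ((Fin m → ℂ) × (Fin r → ℝ)) = Module.finrank ℝ (Fin N → ℝ) := by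
    rw [Module.finrank_prod, Module.finrank_pi_fintype]
    simp [Complex.finrank_real_complex]
    omega
  let e : ((Fin m → ℂ) × (Fin r → ℝ)) ≃ₗ[ℝ] (Fin N → ℝ) := LinearEquiv.ofFinrankEq _ _ hV
  let R : ((Fin m → ℂ) × (Fin r → ℝ)) →ₗ[ℝ] ((Fin m → ℂ) × (Fin r → ℝ)) :=
    { toFun := fun v => (fun i => Complex.exp (θ i * Complex.I) * v.1 i, v.2)
      map_add' := by
        intro x y
        refine Prod.ext (funext fun i => ?_) rfl
        exact mul_add _ _ _
      map_smul' := by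
        intro c x
        refine Prod.ext (funext fun i => ?_) rfl
        simp only [Prod.smul_fst, Pi.smul_apply, RingHom.id_apply, Complex.real_smul]
        ring }
  have hR : ∀ (k : ℕ) (v : (Fin m → ℂ) × (Fin r → ℝ)),
      (R ^ k) v = (fun i => Complex.exp (θ i * Complex.I) ^ k * v.1 i, v.2) := by
    intro k
    induction k with
    | zero => intro v; simp
    | succ k ih =>
      intro v
      rw [pow_succ, Module.End.mul_apply, ih]
      refine Prod.ext (funext fun i => ?_) rfl
      simp only [R, LinearMap.coe_mk, AddHom.coe_mk]
      ring
  let j : (Fin m → ℝ) × (Fin r → ℝ) →ₗ[ℝ] ((Fin m → ℂ) × (Fin r → ℝ)) :=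
    { toFun := fun v => (fun i => (v.1 i : ℂ), v.2)
      map_add' := by intro x y; ext <;> simp
      map_smul' := by intro c x; ext <;> simp }
  have hj : Function.Injective j := by
    intro x y h
    have h1 := congrArg Prod.fst h
    have h2 := congrArg Prod.snd h
    refine Prod.ext (funext fun i => ?_) h2
    exact Complex.ofReal_injective (congrFun h1 i)
  let T := e.conjAlgEquiv ℝ R
  have hT : ∀ (k : ℕ) (v : (Fin m → ℂ) × (Fin r → ℝ)), (T ^ k) (e v) = e ((R ^ k) v) := by
    intro k v
    simp only [T, ← map_pow]
    simp [LinearEquiv.conjAlgEquiv_apply]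
  refine ⟨T, LinearMap.range (e.toLinearMap ∘ₗ j), ?_, ?_⟩
  · rw [LinearMap.finrank_range_of_inj (by simpa using hj)]
    simp
    omega
  · have hc : Continuous e := LinearMap.continuous_of_finiteDimensional e.toLinearMap
    refine (e.surjective.denseRange.dense_image hc hθ).mono ?_
    rintro _ ⟨_, ⟨k, a, w, rfl⟩, rfl⟩
    refine Set.mem_iUnion.2 ⟨k, e (j (a, w)), ⟨(a, w), rfl⟩, ?_⟩
    rw [hT, hR]
    rfl

/-! ### Growth of exponential polynomials -/

/-- The monomial sequence `k ↦ k ^ j * exp (α k)` attached to `(α, j)`. -/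
noncomputable def expMonomial : Multiplicative (ℝ × ℕ) →* (ℕ → ℝ) where
  toFun a k := (k : ℝ) ^ a.toAdd.2 * Real.exp (a.toAdd.1 * k)
  map_one' := by funext k; simp
  map_mul' a b := by
    funext k
    simp only [toAdd_mul, Prod.snd_add, Prod.fst_add, Pi.mul_apply, add_mul, Real.exp_add, pow_add]
    ring

/-- The algebra of exponential polynomials `∑ c_i k ^ j_i exp (α_i k)` with real exponents,
considered up to finitely many terms. -/
noncomputable def expPoly : Subalgebra ℝ (ℕ → ℝ) where
  carrier := {f | ∃ x : AddMonoidAlgebra ℝ (ℝ × ℕ),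
    f =ᶠ[Filter.atTop] AddMonoidAlgebra.lift ℝ (ℕ → ℝ) (ℝ × ℕ) expMonomial x}
  mul_mem' := by
    rintro f g ⟨x, hx⟩ ⟨y, hy⟩
    exact ⟨x * y, by rw [map_mul]; exact hx.mul hy⟩
  add_mem' := by
    rintro f g ⟨x, hx⟩ ⟨y, hy⟩
    exact ⟨x + y, by rw [map_add]; exact hx.add hy⟩
  algebraMap_mem' := by
    intro c
    exact ⟨algebraMap ℝ _ c, by rw [AlgHom.commutes]⟩

open Filter Topology in
/-- Monomials are ordered by growth, lexicographically in the exponent and then the degree. -/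
theorem tendsto_expMonomial_div {a b : ℝ × ℕ} (h : toLex a < toLex b) :
    Tendsto (fun k => expMonomial (.ofAdd a) k / expMonomial (.ofAdd b) k) atTop (𝓝 0) := by
  obtain ⟨α, j⟩ := a
  obtain ⟨β, l⟩ := b
  simp only [expMonomial, MonoidHom.coe_mk, OneHom.coe_mk, toAdd_ofAdd]
  rw [Prod.Lex.toLex_lt_toLex] at h
  rcases h with h | ⟨h, h'⟩
  · simp only at h
    have hr : |Real.exp (α - β)| < 1 := by
      rw [abs_of_pos (Real.exp_pos _), Real.exp_lt_one_iff]
      linarith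
    refine squeeze_zero_norm' ?_ (tendsto_pow_const_mul_const_pow_of_abs_lt_one j hr)
    filter_upwards [eventually_ge_atTop 1] with k hk
    have hk1 : (1 : ℝ) ≤ (k : ℝ) ^ l := one_le_pow₀ (by exact_mod_cast hk)
    rw [Real.norm_of_nonneg (by positivity), ← Real.exp_nat_mul,
      show (k : ℝ) * (α - β) = α * k - β * k by ring, Real.exp_sub, ← mul_div_assoc]
    gcongr
    exact le_mul_of_one_le_left (Real.exp_pos _).le hk1
  · simp only at h h'
    subst h
    have h1 : Tendsto (fun k : ℕ => ((k : ℝ) ^ (l - j))⁻¹) atTop (𝓝 0) :=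
      tendsto_inv_atTop_zero.comp
        ((tendsto_pow_atTop (by omega)).comp tendsto_natCast_atTop_atTop)
    refine h1.congr' ?_
    filter_upwards [eventually_ge_atTop 1] with k hk
    have hk0 : (k : ℝ) ≠ 0 := by positivity
    obtain ⟨i, rfl⟩ := Nat.exists_eq_add_of_lt h'
    rw [show j + i + 1 - j = i + 1 by omega]
    have := (Real.exp_pos (α * k)).ne'
    field_simp
    ring

open Filter Topology in
/-- An exponential polynomial is eventually zero or has an exact order of growth. -/
theorem expPoly_leading {f : ℕ → ℝ} (hf : f ∈ expPoly) :
    f =ᶠ[atTop] 0 ∨ ∃ (a : ℝ × ℕ) (c : ℝ), c ≠ 0 ∧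
      Tendsto (fun k => f k / expMonomial (.ofAdd a) k) atTop (𝓝 c) := by
  obtain ⟨x, hx⟩ := hf
  rw [AddMonoidAlgebra.lift_apply, Finsupp.sum] at hx
  rcases x.coeff.support.eq_empty_or_nonempty with h | h
  · left
    rw [h] at hx
    simpa using hx
  · right
    obtain ⟨a, ha, hmax⟩ := Finset.exists_max_image x.coeff.support (toLex : ℝ × ℕ → ℝ ×ₗ ℕ) h
    refine ⟨a, x.coeff a, Finsupp.mem_support_iff.1 ha, ?_⟩
    have hterm : ∀ b ∈ x.coeff.support,
        Tendsto (fun k => x.coeff b * (expMonomial (.ofAdd b) k / expMonomial (.ofAdd a) k)) atTop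
          (𝓝 (if b = a then x.coeff a else 0)) := by
      intro b hb
      split_ifs with hba
      · subst hba
        refine tendsto_const_nhds.congr' ?_
        filter_upwards [eventually_ge_atTop 1] with k hk
        have : expMonomial (.ofAdd b) k ≠ 0 := by
          have hk0 : (k : ℝ) ≠ 0 := by positivity
          simp only [expMonomial, MonoidHom.coe_mk, OneHom.coe_mk]
          positivity
        rw [div_self this, mul_one]
      · have hlt : toLex b < toLex a := lt_of_le_of_ne (hmax b hb) (by simpa using hba)
        simpa using (tendsto_expMonomial_div hlt).const_mul (x.coeff b)
    have := tendsto_finsetSum x.coeff.support hterm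
    rw [Finset.sum_ite_eq' _ _ _, if_pos ha] at this
    refine this.congr' ?_
    filter_upwards [hx] with k hk
    rw [hk, Finset.sum_apply, Finset.sum_div]
    refine Finset.sum_congr rfl fun b _ => ?_
    rw [Pi.smul_apply, smul_eq_mul, mul_div_assoc]

open Filter Topology in
/-- In a finite family of exponential polynomials that are not all eventually zero, some member
dominates: all the quotients by it converge. -/
theorem exists_dominant {ι : Type*} [Finite ι] (p : ι → ℕ → ℝ) (hp : ∀ i, p i ∈ expPoly)
    (h0 : ∃ i, ¬ p i =ᶠ[atTop] 0) :
    ∃ i, (∀ᶠ k in atTop, p i k ≠ 0) ∧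
      ∀ j, ∃ c, Tendsto (fun k => p j k / p i k) atTop (𝓝 c) := by
  have := Fintype.ofFinite ι
  have hlead : ∀ i, ¬ p i =ᶠ[atTop] 0 → ∃ (a : ℝ × ℕ) (c : ℝ), c ≠ 0 ∧
      Tendsto (fun k => p i k / expMonomial (.ofAdd a) k) atTop (𝓝 c) :=
    fun i hi => (expPoly_leading (hp i)).resolve_left hi
  choose! a c hc hlim using hlead
  classical
  obtain ⟨i, hi, hmax⟩ := Finset.exists_max_image
    (Finset.univ.filter fun i => ¬ p i =ᶠ[atTop] 0) (fun i => toLex (a i))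
    (by obtain ⟨i, hi⟩ := h0; exact ⟨i, by simpa using hi⟩)
  simp only [Finset.mem_filter, Finset.mem_univ, true_and] at hi hmax
  have hmono : ∀ᶠ k in atTop, expMonomial (.ofAdd (a i)) k ≠ 0 := by
    filter_upwards [eventually_ge_atTop 1] with k hk
    have hk0 : (k : ℝ) ≠ 0 := by positivity
    simp only [expMonomial, MonoidHom.coe_mk, OneHom.coe_mk]
    positivity
  have hne : ∀ᶠ k in atTop, p i k ≠ 0 := by
    filter_upwards [(hlim i hi).eventually_ne (hc i hi)] with k hk h
    exact hk (by simp [h])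
  refine ⟨i, hne, fun j => ?_⟩
  have hj : ∃ d, Tendsto (fun k => p j k / expMonomial (.ofAdd (a i)) k) atTop (𝓝 d) := by
    by_cases hj : p j =ᶠ[atTop] 0
    · refine ⟨0, tendsto_const_nhds.congr' ?_⟩
      filter_upwards [hj] with k hk
      simp [hk]
    · rcases (hmax j hj).lt_or_eq with hlt | heq
      · refine ⟨c j * 0, ((hlim j hj).mul (tendsto_expMonomial_div hlt)).congr' ?_⟩
        filter_upwards [eventually_ge_atTop 1] with k hk
        have : expMonomial (.ofAdd (a j)) k ≠ 0 := by
          have hk0 : (k : ℝ) ≠ 0 := by positivity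
          simp only [expMonomial, MonoidHom.coe_mk, OneHom.coe_mk]
          positivity
        field_simp
      · have : a j = a i := toLex.injective heq
        exact ⟨c j, this ▸ hlim j hj⟩
  obtain ⟨d, hd⟩ := hj
  refine ⟨d / c i, (hd.div (hlim i hi) (hc i hi)).congr' ?_⟩
  filter_upwards [hmono, hne] with k hk hk'
  rw [Pi.div_apply]
  field_simp

/-! ### Limits of column spaces -/

/-- A matrix of full column rank has a nonzero maximal minor. -/
theorem exists_minor_ne_zero {N n : ℕ} (M : Matrix (Fin N) (Fin n) ℝ)
    (hM : Function.Injective M.mulVec) : ∃ f : Fin n → Fin N, (M.submatrix f id).det ≠ 0 := by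
  have hr : M.rank = n := by
    have : Function.Injective M.mulVecLin := hM
    rw [Matrix.rank, LinearMap.finrank_range_of_inj this]
    simp
  rw [Matrix.rank_eq_finrank_span_row] at hr
  obtain ⟨g, hg, -, hli⟩ := Submodule.exists_fun_fin_finrank_span_eq ℝ (Set.range M.row)
  choose f hf using hg
  let e : Fin n ≃ Fin (Module.finrank ℝ (Submodule.span ℝ (Set.range M.row))) := finCongr hr.symm
  refine ⟨f ∘ e, ?_⟩
  have h1 : LinearIndependent ℝ (M.submatrix (f ∘ e) id).row := by
    have : (M.submatrix (f ∘ e) id).row = g ∘ e := by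
      funext i
      simp only [Function.comp_apply, ← hf]
      rfl
    rw [this]
    exact hli.comp _ e.injective
  rw [Matrix.linearIndependent_rows_iff_isUnit, Matrix.isUnit_iff_isUnit_det] at h1
  exact h1.ne_zero

/-- Cramer's rule: a vector in the column space of `M` is recovered from its coordinates along the
rows selected by `f` through quotients of maximal minors. -/
theorem det_mul_mulVec {N n : ℕ} (M : Matrix (Fin N) (Fin n) ℝ) (f : Fin n → Fin N)
    (c : Fin n → ℝ) (i : Fin N) :
    (M.submatrix f id).det * (M *ᵥ c) i =
      ∑ l, (M.submatrix (Function.update f l i) id).det * (M *ᵥ c) (f l) := by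
  set A := M.submatrix f id with hA
  have h1 : ∀ l, (M.submatrix (Function.update f l i) id).det = Matrix.cramer Aᵀ (M i) l := by
    intro l
    rw [Matrix.cramer_transpose_apply]
    congr 1
    ext a b
    by_cases h : a = l
    · subst h; simp
    · simp [h, hA]
  have h2 := Matrix.mulVec_cramer Aᵀ (M i)
  rw [Matrix.det_transpose] at h2
  have h3 : ∀ l, (M *ᵥ c) (f l) = (A *ᵥ c) l := fun l => rfl
  simp only [h1, h3]
  change A.det * (M i ⬝ᵥ c) = Matrix.cramer Aᵀ (M i) ⬝ᵥ (A *ᵥ c)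
  rw [Matrix.dotProduct_mulVec, ← Matrix.mulVec_transpose, h2, smul_dotProduct, smul_eq_mul]

theorem det_mem_expPoly {n : ℕ} (M : ℕ → Matrix (Fin n) (Fin n) ℝ)
    (hM : ∀ i j, (fun k => M k i j) ∈ expPoly) : (fun k => (M k).det) ∈ expPoly := by
  have : (fun k => (M k).det) = ∑ σ : Equiv.Perm (Fin n),
      ((Equiv.Perm.sign σ : ℤ) : ℝ) • ∏ i, (fun k => M k (σ i) i) := by
    funext k
    simp [Matrix.det_apply', Finset.sum_apply, Finset.prod_apply]
  rw [this]
  exact Subalgebra.sum_mem _ fun σ _ =>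
    Subalgebra.smul_mem _ (Subalgebra.prod_mem _ fun i _ => hM _ _) _

open Filter Topology in
/-- If the entries of `M k` are exponential polynomials, the column spaces of the `M k` converge:
all limits of vectors taken in them lie in the column space of a single matrix `Q`. -/
theorem exists_limit_matrix {N n : ℕ} (M : ℕ → Matrix (Fin N) (Fin n) ℝ)
    (hM : ∀ i j, (fun k => M k i j) ∈ expPoly) (hinj : ∀ k, Function.Injective (M k).mulVec) :
    ∃ Q : Matrix (Fin N) (Fin n) ℝ, ∀ (κ : ℕ → ℕ) (c : ℕ → Fin n → ℝ) (z : Fin N → ℝ),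
      Tendsto κ atTop atTop → Tendsto (fun j => M (κ j) *ᵥ c j) atTop (𝓝 z) →
      ∃ w, z = Q *ᵥ w := by
  let p : (Fin n → Fin N) → ℕ → ℝ := fun f k => ((M k).submatrix f id).det
  have hp : ∀ f, p f ∈ expPoly := fun f => det_mem_expPoly _ fun i j => hM _ _
  have h0 : ∃ f, ¬ p f =ᶠ[atTop] 0 := by
    by_contra! h
    obtain ⟨k, hk⟩ := (eventually_all.2 h).exists
    obtain ⟨f, hf⟩ := exists_minor_ne_zero (M k) (hinj k)
    exact hf (hk f)
  obtain ⟨f, hne, hlim⟩ := exists_dominant p hp h0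
  choose q hq using hlim
  -- `Q` is the limit of `M k` normalized to have the identity in the dominant rows `f`
  refine ⟨Matrix.of fun i l => q (Function.update f l i), fun κ c z hκ hz => ⟨z ∘ f, ?_⟩⟩
  funext i
  have hcoord : ∀ a, Tendsto (fun j => (M (κ j) *ᵥ c j) a) atTop (𝓝 (z a)) := tendsto_pi_nhds.1 hz
  have hsum : Tendsto (fun j => ∑ l, (p (Function.update f l i) (κ j) / p f (κ j)) *
      (M (κ j) *ᵥ c j) (f l)) atTop (𝓝 (∑ l, q (Function.update f l i) * z (f l))) :=
    tendsto_finsetSum _ fun l _ => ((hq _).comp hκ).mul (hcoord _)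
  refine tendsto_nhds_unique ((hcoord i).congr' ?_) hsum
  filter_upwards [hκ.eventually hne] with j hj
  have := det_mul_mulVec (M (κ j)) f (c j) i
  change p f (κ j) * _ = ∑ l, p (Function.update f l i) (κ j) * _ at this
  rw [← mul_div_cancel_left₀ ((M (κ j) *ᵥ c j) i) hj, this, Finset.sum_div]
  exact Finset.sum_congr rfl fun l _ => by ring

/-! ### Functional calculus on the complex spectrum -/

/-- Additive Jordan–Chevalley decomposition of a real matrix. -/
theorem exists_semisimple_add_nilpotent {N : ℕ} (A : Matrix (Fin N) (Fin N) ℝ) :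
    ∃ s n : Matrix (Fin N) (Fin N) ℝ, A = s + n ∧ Commute s n ∧ IsNilpotent n ∧
      Squarefree (minpoly ℝ s) := by
  let e : Matrix (Fin N) (Fin N) ℝ ≃ₐ[ℝ] Module.End ℝ (Fin N → ℝ) := Matrix.toLinAlgEquiv'
  obtain ⟨n, hn, s, hs, hnil, hss, h⟩ := (e A).exists_isNilpotent_isSemisimple
  have hcomm : Commute s n := Algebra.commute_of_mem_adjoin_singleton_of_commute hn
    (Algebra.commute_of_mem_adjoin_self hs).symm
  refine ⟨e.symm s, e.symm n, ?_, ?_, ?_, ?_⟩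
  · apply e.injective
    simp [h, add_comm]
  · exact hcomm.map e.symm
  · exact hnil.map e.symm
  · rw [minpoly.algEquiv_eq]
    exact hss.minpoly_squarefree

/-- Functions on a set of complex numbers that intertwine complex conjugation. -/
def ConjSymm {S : Finset ℂ} (g : S → ℂ) : Prop :=
  ∀ i j : S, (j : ℂ) = (starRingEnd ℂ) i → g j = (starRingEnd ℂ) (g i)

open Polynomial in
/-- Functional calculus of a real semisimple matrix `s`: functions `g` on its complex spectrum `S`
act through (real parts of) Lagrange interpolating polynomials evaluated at `s`. -/
theorem exists_functional_calculus {N : ℕ} (s : Matrix (Fin N) (Fin N) ℝ)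
    (hs : Squarefree (minpoly ℝ s)) :
    ∃ S : Finset ℂ, (∀ z ∈ S, (starRingEnd ℂ) z ∈ S) ∧ S.card ≤ N ∧
      ∃ ψ : (S → ℂ) →ₗ[ℝ] Matrix (Fin N) (Fin N) ℝ,
        ψ 1 = 1 ∧ ψ (fun i => (i : ℂ)) = s ∧
        (∀ g h, ConjSymm g → ConjSymm h → ψ (g * h) = ψ g * ψ h) ∧
        ∀ n, Commute s n → ∀ g, Commute (ψ g) n := by
  have hint : IsIntegral ℝ s := Matrix.isIntegral s
  have hm0 : minpoly ℝ s ≠ 0 := minpoly.ne_zero hint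
  let m : ℂ[X] := (minpoly ℝ s).map (algebraMap ℝ ℂ)
  have hm0' : m ≠ 0 := (Polynomial.map_ne_zero hm0)
  have hsep : m.Separable := (PerfectField.separable_iff_squarefree.2 hs).map
  let S : Finset ℂ := m.roots.toFinset
  let φ : Matrix (Fin N) (Fin N) ℝ →ₐ[ℝ] Matrix (Fin N) (Fin N) ℂ := Complex.ofRealAm.mapMatrix
  have hφ : Function.Injective φ := fun a b h => by
    ext i j
    have := congrFun (congrFun h i) j
    exact Complex.ofReal_injective this
  -- `φ s` is killed by the squarefree `m`, so `q (φ s)` depends only on the values of `q` on `S`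
  have hkill : ∀ p q : ℂ[X], (∀ z ∈ S, p.eval z = q.eval z) → aeval (φ s) p = aeval (φ s) q := by
    intro p q h
    rw [← sub_eq_zero, ← map_sub]
    have hdvd : m ∣ p - q := by
      rcases eq_or_ne (p - q) 0 with h0 | h0
      · rw [h0]; exact dvd_zero _
      rw [IsAlgClosed.dvd_iff_roots_le_roots hm0' h0,
        Multiset.le_iff_subset (nodup_roots hsep)]
      intro z hz
      rw [mem_roots h0, IsRoot.def, eval_sub, h z (Multiset.mem_toFinset.2 hz), sub_self]
    obtain ⟨r, hr⟩ := hdvd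
    have hm : aeval (φ s) m = 0 := by
      simp only [m]
      rw [aeval_map_algebraMap, aeval_algHom_apply, minpoly.aeval, map_zero]
    rw [hr, map_mul, hm, zero_mul]
  have hconj : ∀ z ∈ S, (starRingEnd ℂ) z ∈ S := by
    intro z hz
    simp only [S, Multiset.mem_toFinset, mem_roots hm0', IsRoot.def] at hz ⊢
    have h1 : m.map (starRingEnd ℂ) = m := by
      simp only [m, Polynomial.map_map]
      congr 1
      ext x
      simp
    rw [← h1, eval_map_apply, hz, map_zero]
  -- Lagrange interpolation of functions on the spectrum
  let L : (S → ℂ) →ₗ[ℂ] ℂ[X] := Lagrange.interpolate Finset.univ (fun i : S => (i : ℂ))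
  have hL : ∀ (g : S → ℂ) (i : S), (L g).eval (i : ℂ) = g i := fun g i =>
    Lagrange.eval_interpolate_at_node g Subtype.val_injective.injOn (Finset.mem_univ i)
  let ψ : (S → ℂ) →ₗ[ℝ] Matrix (Fin N) (Fin N) ℝ :=
    { toFun := fun g => (aeval (φ s) (L g)).map Complex.re
      map_add' := by
        intro x y
        ext i j
        simp
      map_smul' := by
        intro c x
        have : L (c • x) = (c : ℂ) • L x := by
          rw [← map_smul]
          congr 1
        ext i j
        rw [this, map_smul]
        simp }
  -- for conjugation-symmetric `g` no information is lost by taking real parts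
  have hreal : ∀ g, ConjSymm g → φ (ψ g) = aeval (φ s) (L g) := by
    intro g hg
    have h1 : (starRingEnd ℂ).mapMatrix (aeval (φ s) (L g)) = aeval (φ s) (L g) := by
      have h2 : (starRingEnd ℂ).mapMatrix (φ s) = φ s := by
        ext i j
        simp [φ]
      rw [map_aeval_eq_aeval_map (φ := starRingEnd ℂ), h2]
      · apply hkill
        intro z hz
        have := hL g ⟨_, hconj z hz⟩
        rw [hL g ⟨z, hz⟩]
        have h3 := eval_map_apply (p := L g) (starRingEnd ℂ) ((starRingEnd ℂ) z)
        rw [Complex.conj_conj] at h3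
        rw [h3, this, ← hg ⟨_, hconj z hz⟩ ⟨z, hz⟩ (by simp)]
      · ext x i j
        simp only [RingHom.comp_apply, RingHom.mapMatrix_apply, Matrix.map_apply,
          Matrix.algebraMap_matrix_apply]
        split_ifs <;> simp
    ext i j
    have h2 := congrFun (congrFun h1 i) j
    exact Complex.conj_eq_iff_re.1 h2
  refine ⟨S, hconj, ?_, ψ, ?_, ?_, ?_, ?_⟩
  · calc S.card ≤ Multiset.card m.roots := Multiset.toFinset_card_le _
      _ ≤ m.natDegree := m.card_roots'
      _ = (minpoly ℝ s).natDegree := natDegree_map _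
      _ ≤ s.charpoly.natDegree :=
        natDegree_le_of_dvd (Matrix.minpoly_dvd_charpoly s) s.charpoly_monic.ne_zero
      _ = N := by simp
  · apply hφ
    rw [hreal 1 (fun i j _ => by simp), map_one φ, ← map_one (aeval (R := ℂ) (φ s))]
    exact hkill _ _ fun z hz => by simp [hL 1 ⟨z, hz⟩]
  · apply hφ
    refine (hreal _ (fun i j h => h)).trans ?_
    conv_rhs => rw [← aeval_X (R := ℂ) (φ s)]
    exact hkill _ _ fun z hz => by rw [hL _ ⟨z, hz⟩, eval_X]
  · intro g h hg hh
    apply hφ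
    rw [map_mul φ, hreal g hg, hreal h hh, hreal _ (fun i j hij => by
      simp [hg i j hij, hh i j hij]), ← map_mul]
    refine hkill _ _ fun z hz => ?_
    rw [eval_mul, hL _ ⟨z, hz⟩, hL _ ⟨z, hz⟩, hL _ ⟨z, hz⟩, Pi.mul_apply]
  · intro n hn g
    have h1 : Commute (aeval (φ s) (L g)) (φ n) :=
      (Algebra.commute_of_mem_adjoin_singleton_of_commute
        (aeval_mem_adjoin_singleton ℂ (φ s)) (hn.map φ).symm).symm
    ext i j
    have h2 := congrArg Complex.re (congrFun (congrFun h1.eq i) j)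
    simpa [Matrix.mul_apply, φ, ψ] using h2

/-! ### Powers of a matrix with nonnegative semisimple part -/

open Filter Topology in
theorem expPoly_congr {f g : ℕ → ℝ} (hf : f ∈ expPoly) (h : g =ᶠ[atTop] f) : g ∈ expPoly := by
  obtain ⟨x, hx⟩ := hf
  exact ⟨x, h.trans hx⟩

theorem expMonomial_mem (a : Multiplicative (ℝ × ℕ)) : expMonomial a ∈ expPoly :=
  ⟨AddMonoidAlgebra.single a.toAdd 1, by rw [AddMonoidAlgebra.lift_single]; simp⟩

theorem natCast_mem_expPoly : (fun k : ℕ => (k : ℝ)) ∈ expPoly := by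
  have := expMonomial_mem (.ofAdd (0, 1))
  have h : (expMonomial (.ofAdd (0, 1))) = fun k : ℕ => (k : ℝ) := by
    funext k
    simp [expMonomial]
  rwa [h] at this

theorem choose_mem_expPoly (j : ℕ) : (fun k : ℕ => (k.choose j : ℝ)) ∈ expPoly := by
  induction j with
  | zero =>
    simp only [Nat.choose_zero_right, Nat.cast_one]
    exact Subalgebra.one_mem expPoly
  | succ j ih =>
    have h := Subalgebra.smul_mem _ (Subalgebra.mul_mem _ ih (Subalgebra.sub_mem _
      natCast_mem_expPoly (Subalgebra.algebraMap_mem expPoly (j : ℝ)))) ((j + 1 : ℝ)⁻¹)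
    refine expPoly_congr h ?_
    filter_upwards [Filter.eventually_ge_atTop j] with k hk
    have h2 : ((k.choose (j + 1) * (j + 1) : ℕ) : ℝ) = ((k.choose j * (k - j) : ℕ) : ℝ) := by
      rw [Nat.choose_succ_right_eq]
    push_cast [Nat.cast_sub hk] at h2
    have : (j + 1 : ℝ) ≠ 0 := by positivity
    simp only [Pi.smul_apply, Pi.mul_apply, Pi.sub_apply, smul_eq_mul, Pi.algebraMap_apply,
      Algebra.algebraMap_self, RingHom.id_apply]
    rw [← h2]
    field_simp

theorem pow_sub_mem_expPoly {r : ℝ} (hr : 0 ≤ r) (j : ℕ) :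
    (fun k : ℕ => r ^ (k - j)) ∈ expPoly := by
  rcases hr.eq_or_lt with rfl | hr
  · refine expPoly_congr (Subalgebra.zero_mem expPoly) ?_
    filter_upwards [Filter.eventually_gt_atTop j] with k hk
    simp [Nat.sub_ne_zero_of_lt hk]
  · refine expPoly_congr (Subalgebra.smul_mem _ (expMonomial_mem (.ofAdd (Real.log r, 0)))
      (r ^ j)⁻¹) ?_
    filter_upwards [Filter.eventually_ge_atTop j] with k hk
    have h1 : expMonomial (.ofAdd (Real.log r, 0)) k = r ^ k := by
      simp only [expMonomial, MonoidHom.coe_mk, OneHom.coe_mk, toAdd_ofAdd, pow_zero, one_mul]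
      rw [mul_comm, Real.exp_nat_mul, Real.exp_log hr]
    rw [Pi.smul_apply, h1, smul_eq_mul, pow_sub₀ _ hr.ne' hk, mul_comm]

/-- If `H ^ k = ∑ r_i ^ k C_i` with `r_i ≥ 0` and `n` is nilpotent and commutes with `H`, then the
entries of `(n + H) ^ k` are exponential polynomials in `k`. -/
theorem pow_entries_mem_expPoly {N : ℕ} {ι : Type*} [Fintype ι] (H n : Matrix (Fin N) (Fin N) ℝ)
    (hc : Commute n H) (hn : IsNilpotent n) (r : ι → ℝ) (hr : ∀ i, 0 ≤ r i)
    (C : ι → Matrix (Fin N) (Fin N) ℝ) (hH : ∀ k : ℕ, H ^ k = ∑ i, r i ^ k • C i)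
    (a b : Fin N) : (fun k : ℕ => ((n + H) ^ k) a b) ∈ expPoly := by
  obtain ⟨d, hd⟩ := hn
  have hmem : (∑ m ∈ Finset.range d, ∑ i, ((n ^ m * C i) a b) •
      ((fun k : ℕ => (k.choose m : ℝ)) * fun k : ℕ => r i ^ (k - m))) ∈ expPoly :=
    Subalgebra.sum_mem _ fun m _ => Subalgebra.sum_mem _ fun i _ => Subalgebra.smul_mem _
      (Subalgebra.mul_mem _ (choose_mem_expPoly m) (pow_sub_mem_expPoly (hr i) m)) _
  refine expPoly_congr hmem ?_
  filter_upwards [Filter.eventually_ge_atTop d] with k hk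
  rw [hc.add_pow]
  have hsub : ∑ m ∈ Finset.range (k + 1), n ^ m * H ^ (k - m) * (k.choose m : Matrix _ _ ℝ)
      = ∑ m ∈ Finset.range d, n ^ m * H ^ (k - m) * (k.choose m : Matrix (Fin N) (Fin N) ℝ) := by
    refine (Finset.sum_subset (Finset.range_mono (by omega)) fun m _ hm => ?_).symm
    rw [pow_eq_zero_of_le (by simpa using hm) hd, zero_mul, zero_mul]
  rw [hsub, Matrix.sum_apply]
  simp only [Finset.sum_apply, Pi.smul_apply, Pi.mul_apply, smul_eq_mul]
  refine Finset.sum_congr rfl fun m _ => ?_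
  rw [hH, ← nsmul_eq_mul', Matrix.smul_apply, Finset.mul_sum, Matrix.sum_apply, nsmul_eq_mul,
    Finset.mul_sum]
  refine Finset.sum_congr rfl fun i _ => ?_
  rw [Matrix.mul_smul, Matrix.smul_apply, smul_eq_mul]
  ring

/-! ### The unimodular part -/

/-- Unimodular functions on `S` that intertwine complex conjugation; a compact abelian group. -/
def unimodular (S : Finset ℂ) : Set (S → ℂ) := {g | ConjSymm g ∧ ∀ i, ‖g i‖ = 1}

theorem isCompact_unimodular (S : Finset ℂ) : IsCompact (unimodular S) := by
  have h1 : IsCompact (Set.univ.pi fun _ : S => Metric.sphere (0 : ℂ) 1) :=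
    isCompact_univ_pi fun _ => isCompact_sphere _ _
  have h2 : IsClosed {g : S → ℂ | ConjSymm g} := by
    simp only [ConjSymm, Set.ofPred_forall]
    refine isClosed_iInter fun i => isClosed_iInter fun j => isClosed_iInter fun _ => ?_
    exact isClosed_eq (by fun_prop) (by fun_prop)
  convert h1.inter_right h2 using 1
  ext g
  simp [unimodular, and_comm]

/-- **Polar form of the powers of a matrix.** `A ^ k = ψ (u ^ k) * R ^ k`, where `u` is unimodular
and the entries of `R ^ k` are exponential polynomials with real exponents. -/
theorem exists_polar {N : ℕ} (A : Matrix (Fin N) (Fin N) ℝ) :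
    ∃ S : Finset ℂ, (∀ z ∈ S, (starRingEnd ℂ) z ∈ S) ∧ S.card ≤ N ∧
      ∃ (ψ : (S → ℂ) →ₗ[ℝ] Matrix (Fin N) (Fin N) ℝ) (u : S → ℂ)
        (R : Matrix (Fin N) (Fin N) ℝ),
        ψ 1 = 1 ∧ (∀ g h, ConjSymm g → ConjSymm h → ψ (g * h) = ψ g * ψ h) ∧
        u ∈ unimodular S ∧ (∀ k : ℕ, A ^ k = ψ (u ^ k) * R ^ k) ∧
        ∀ a b, (fun k : ℕ => (R ^ k) a b) ∈ expPoly := by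
  obtain ⟨s, n, hA, hcomm, hnil, hsq⟩ := exists_semisimple_add_nilpotent A
  obtain ⟨S, hS, hcard, ψ, h1, hid, hmul, hψc⟩ := exists_functional_calculus s hsq
  -- the phase of each eigenvalue; at the eigenvalue `0` it is `1`
  let u : S → ℂ := fun i => if (i : ℂ) = 0 then 1 else (i : ℂ) / ‖(i : ℂ)‖
  let ρ : S → ℂ := fun i => (‖(i : ℂ)‖ : ℂ)
  have hu : u ∈ unimodular S := by
    refine ⟨fun i j hij => ?_, fun i => ?_⟩
    · simp only [u, hij]
      by_cases h0 : (i : ℂ) = 0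
      · simp [h0]
      · simp [h0]
    · simp only [u]
      split_ifs with h0
      · simp
      · simp [h0]
  have hρ : ConjSymm ρ := fun i j hij => by simp [ρ, hij]
  let v : S → ℂ := fun i => (starRingEnd ℂ) (u i)
  have hv : ConjSymm v := fun i j hij => by simp [v, hu.1 i j hij]
  have huv : u * v = 1 := by
    funext i
    simp [v, Complex.mul_conj, Complex.normSq_eq_norm_sq, hu.2 i]
  have huρ : u * ρ = fun i : S => (i : ℂ) := by
    funext i
    simp only [u, ρ, Pi.mul_apply]
    split_ifs with h0
    · simp [h0]
    · have : (‖(i : ℂ)‖ : ℂ) ≠ 0 := by simpa using h0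
      field_simp
  have hpowc : ∀ g : S → ℂ, ConjSymm g → ∀ k : ℕ, ConjSymm (g ^ k) := fun g hg k i j hij => by
    simp [hg i j hij]
  have hpow : ∀ g : S → ℂ, ConjSymm g → ∀ k : ℕ, ψ (g ^ k) = ψ g ^ k := by
    intro g hg k
    induction k with
    | zero => simp [h1]
    | succ k ih => rw [pow_succ, pow_succ, hmul _ _ (hpowc g hg k) hg, ih]
  have hcs : ∀ g h, ConjSymm g → ConjSymm h → Commute (ψ g) (ψ h) := fun g h hg hh => by
    rw [Commute, SemiconjBy, ← hmul g h hg hh, ← hmul h g hh hg, mul_comm]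
  have hUV : ψ u * ψ v = 1 := by rw [← hmul u v hu.1 hv, huv, h1]
  have hUn : Commute (ψ u) n := hψc n hcomm u
  have hVn : Commute (ψ v) n := hψc n hcomm v
  have hcH : Commute (ψ v * n) (ψ ρ) := (hcs v ρ hv hρ).mul_left (hψc n hcomm ρ).symm
  -- `ψ u` has inverse `ψ v`, so `s + n = ψ u * (ψ ρ + ψ v * n)` with commuting factors
  refine ⟨S, hS, hcard, ψ, u, ψ v * n + ψ ρ, h1, hmul, hu, fun k => ?_, fun a b => ?_⟩
  · have hAR : A = ψ u * (ψ v * n + ψ ρ) := by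
      rw [mul_add, ← mul_assoc, hUV, one_mul, ← hmul u ρ hu.1 hρ, huρ, hid, hA, add_comm]
    have hUR : Commute (ψ u) (ψ v * n + ψ ρ) :=
      ((hcs u v hu.1 hv).mul_right hUn).add_right (hcs u ρ hu.1 hρ)
    rw [hpow u hu.1, ← hUR.mul_pow, ← hAR]
  · refine pow_entries_mem_expPoly _ _ hcH (hVn.isNilpotent_mul_left hnil)
      (fun i : S => ‖(i : ℂ)‖) (fun i => norm_nonneg _) (fun i => ψ (Pi.single i 1))
      (fun k => ?_) a b
    rw [← hpow ρ hρ]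
    have : ρ ^ k = ∑ i : S, (‖(i : ℂ)‖ ^ k : ℝ) • (Pi.single i 1 : S → ℂ) := by
      funext j
      simp [ρ, Finset.sum_apply, Pi.single_apply]
    rw [this, map_sum]
    simp only [map_smul]

/-- The elements of `S` in the open upper half plane. -/
abbrev UpperIdx (S : Finset ℂ) := {i : S // 0 < (i : ℂ).im}

theorem two_mul_card_upperIdx {S : Finset ℂ} (hS : ∀ z ∈ S, (starRingEnd ℂ) z ∈ S) :
    2 * Fintype.card (UpperIdx S) ≤ S.card := by
  let f : UpperIdx S ⊕ UpperIdx S → S :=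
    Sum.elim (fun i => i.1) (fun i => ⟨(starRingEnd ℂ) i.1, hS _ i.1.2⟩)
  have hf : Function.Injective f := by
    rintro (⟨⟨i, hi⟩, hi'⟩ | ⟨⟨i, hi⟩, hi'⟩) (⟨⟨j, hj⟩, hj'⟩ | ⟨⟨j, hj⟩, hj'⟩) h
    · simpa [f] using h
    · simp only [f, Sum.elim_inl, Sum.elim_inr, Subtype.mk.injEq] at h hi' hj'
      rw [h, Complex.conj_im] at hi'
      linarith
    · simp only [f, Sum.elim_inl, Sum.elim_inr, Subtype.mk.injEq] at h hi' hj'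
      rw [← h, Complex.conj_im] at hj'
      linarith
    · simp only [f, Sum.elim_inr, Subtype.mk.injEq] at h
      have := (starRingEnd ℂ).injective h
      simp [this]
  have := Fintype.card_le_of_injective f hf
  rw [Fintype.card_sum, Fintype.card_coe] at this
  omega

/-- Parametrization of a component of `unimodular S`: angles on the upper half plane, conjugate
values on the lower one, and signs `σ` at real points. -/
noncomputable def torusParam {S : Finset ℂ} (hS : ∀ z ∈ S, (starRingEnd ℂ) z ∈ S)
    (σ : S → Bool) (t : UpperIdx S → ℝ) : S → ℂ := fun i =>
  if h : 0 < (i : ℂ).im then Complex.exp (t ⟨i, h⟩ * Complex.I)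
  else if h : 0 < ((starRingEnd ℂ) (i : ℂ)).im then
    Complex.exp (-t ⟨⟨(starRingEnd ℂ) (i : ℂ), hS _ i.2⟩, h⟩ * Complex.I)
  else if σ i then 1 else -1

theorem contDiff_torusParam {S : Finset ℂ} (hS : ∀ z ∈ S, (starRingEnd ℂ) z ∈ S)
    (σ : S → Bool) : ContDiff ℝ 1 (torusParam hS σ) := by
  have hexp : ContDiff ℝ 1 (fun x : ℝ => Complex.exp (x * Complex.I)) :=
    (Complex.ofRealCLM.contDiff.mul contDiff_const).cexp
  rw [contDiff_pi]
  intro i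
  unfold torusParam
  split_ifs with h h' h''
  · exact hexp.comp (contDiff_apply ℝ ℝ (⟨i, h⟩ : UpperIdx S))
  · simp only [← Complex.ofReal_neg]
    exact hexp.comp
      (contDiff_apply ℝ ℝ (⟨⟨(starRingEnd ℂ) (i : ℂ), hS _ i.2⟩, h'⟩ : UpperIdx S)).neg
  · exact contDiff_const
  · exact contDiff_const

theorem exists_torusParam_eq {S : Finset ℂ} (hS : ∀ z ∈ S, (starRingEnd ℂ) z ∈ S)
    {g : S → ℂ} (hg : g ∈ unimodular S) : ∃ σ t, torusParam hS σ t = g := by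
  classical
  refine ⟨fun i => decide (g i = 1), fun i => (g i.1).arg, ?_⟩
  have hexp : ∀ i, Complex.exp ((g i).arg * Complex.I) = g i := fun i => by
    have := Complex.norm_mul_exp_arg_mul_I (g i)
    rwa [hg.2 i, Complex.ofReal_one, one_mul] at this
  funext i
  unfold torusParam
  split_ifs with h h' h''
  · exact hexp i
  · have h1 := hexp ⟨(starRingEnd ℂ) (i : ℂ), hS _ i.2⟩
    rw [hg.1 i _ rfl] at h1
    have h2 := congrArg (starRingEnd ℂ) h1
    rw [Complex.conj_conj, ← Complex.exp_conj] at h2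
    rw [← h2]
    congr 1
    simp [hg.1 i ⟨(starRingEnd ℂ) (i : ℂ), hS _ i.2⟩ rfl]
  · exact (of_decide_eq_true h'').symm
  · have him : (i : ℂ).im = 0 := by
      rw [Complex.conj_im] at h'
      linarith
    have h1 := hg.1 i i (Complex.conj_eq_iff_im.2 him).symm
    obtain ⟨r, hr⟩ := Complex.conj_eq_iff_real.1 h1.symm
    have h2 := hg.2 i
    rw [hr, Complex.norm_real, Real.norm_eq_abs] at h2
    rcases eq_or_eq_neg_of_abs_eq h2 with h3 | h3
    · simp [hr, h3] at h''
    · simp [hr, h3]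

/-! ### Orbits of small subspaces -/

open Filter Topology in
/-- The orbit of a subspace `range B` of dimension `n < N - ⌊N / 2⌋` under an invertible matrix is
not dense. -/
theorem not_dense_orbit {N n : ℕ} (hn : N / 2 + n < N) (A : Matrix (Fin N) (Fin N) ℝ)
    (hA : Function.Injective A.mulVec) (B : Matrix (Fin N) (Fin n) ℝ)
    (hB : Function.Injective B.mulVec) :
    ¬ Dense (⋃ k : ℕ, Set.range fun c => A ^ k *ᵥ (B *ᵥ c)) := by
  intro hd
  obtain ⟨S, hS, hcard, ψ, u, R, h1, hmul, hu, hpolar, hR⟩ := exists_polar A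
  have hRinj : Function.Injective R.mulVec := by
    have h := hpolar 1
    rw [pow_one, pow_one, pow_one] at h
    intro x y hxy
    apply hA
    simp only [h, ← Matrix.mulVec_mulVec] at hxy ⊢
    rw [hxy]
  have hRk : ∀ k : ℕ, Function.Injective (R ^ k).mulVec := by
    intro k
    induction k with
    | zero => intro x y h; simpa using h
    | succ k ih =>
      intro x y h
      rw [pow_succ, ← Matrix.mulVec_mulVec, ← Matrix.mulVec_mulVec] at h
      exact hRinj (ih h)
  obtain ⟨Q, hQ⟩ := exists_limit_matrix (fun k => R ^ k * B)
    (fun i j => by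
      have : (fun k => (R ^ k * B) i j) = ∑ l, B l j • fun k => (R ^ k) i l := by
        funext k
        simp [Matrix.mul_apply, Finset.sum_apply, mul_comm]
      rw [this]
      exact Subalgebra.sum_mem _ fun l _ => Subalgebra.smul_mem _ (hR i l) _)
    (fun k x y h => by
      simp only [← Matrix.mulVec_mulVec] at h
      exact hB (hRk k h))
  -- the exceptional set: the orbit itself and the torus orbit of the limit subspace
  let Φ : (S → Bool) → (UpperIdx S → ℝ) × (Fin n → ℝ) → Fin N → ℝ :=
    fun σ p => ψ (torusParam hS σ p.1) *ᵥ (Q *ᵥ p.2)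
  have hΦ : ∀ σ, ContDiff ℝ 1 (Φ σ) := by
    intro σ
    rw [contDiff_pi]
    intro a
    have hent : ∀ b, ContDiff ℝ 1 fun g : S → ℂ => ψ g a b := fun b => by
      let l : (S → ℂ) →ₗ[ℝ] ℝ :=
        { toFun := fun g => ψ g a b
          map_add' := by intro x y; simp
          map_smul' := by intro c x; simp }
      exact (LinearMap.toContinuousLinearMap l).contDiff
    have hQs : ∀ b, ContDiff ℝ 1 fun w : Fin n → ℝ => (Q *ᵥ w) b := fun b => by
      simp only [Matrix.mulVec, dotProduct]
      fun_prop
    change ContDiff ℝ 1 fun p : (UpperIdx S → ℝ) × (Fin n → ℝ) =>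
      ∑ b, ψ (torusParam hS σ p.1) a b * (Q *ᵥ p.2) b
    exact ContDiff.sum fun b _ =>
      ((hent b).comp ((contDiff_torusParam hS σ).comp contDiff_fst)).mul
        ((hQs b).comp contDiff_snd)
  have hdim : dimH ((⋃ k : ℕ, Set.range fun c => A ^ k *ᵥ (B *ᵥ c)) ∪ ⋃ σ, Set.range (Φ σ))
      < Module.finrank ℝ (Fin N → ℝ) := by
    have hle : dimH ((⋃ k : ℕ, Set.range fun c => A ^ k *ᵥ (B *ᵥ c)) ∪ ⋃ σ, Set.range (Φ σ))
        ≤ ((N / 2 + n : ℕ) : ENNReal) := by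
      rw [dimH_union, dimH_iUnion, dimH_iUnion]
      refine max_le (iSup_le fun k => ?_) (iSup_le fun σ => ?_)
      · have hc : ContDiff ℝ 1 fun c : Fin n → ℝ => A ^ k *ᵥ (B *ᵥ c) :=
          (LinearMap.toContinuousLinearMap ((A ^ k).mulVecLin ∘ₗ B.mulVecLin)).contDiff
        refine hc.dimH_range_le.trans ?_
        rw [Module.finrank_fin_fun]
        exact_mod_cast Nat.le_add_left _ _
      · refine (hΦ σ).dimH_range_le.trans ?_
        rw [Module.finrank_prod, Module.finrank_fin_fun, Module.finrank_fintype_fun_eq_card]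
        have := two_mul_card_upperIdx hS
        exact_mod_cast (by omega :
          Fintype.card (UpperIdx S) + n ≤ N / 2 + n)
    refine hle.trans_lt ?_
    rw [Module.finrank_fin_fun]
    exact_mod_cast hn
  obtain ⟨x, hx⟩ := (dense_compl_of_dimH_lt_finrank hdim).nonempty
  rw [Set.mem_compl_iff, Set.mem_union, not_or] at hx
  obtain ⟨hx1, hx2⟩ := hx
  -- `x` is not in the orbit, so it is approached along arbitrarily large powers
  have happ : ∀ j : ℕ, ∃ k ≥ j, ∃ c, dist x (A ^ k *ᵥ (B *ᵥ c)) < 1 / ((j : ℝ) + 1) := by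
    intro j
    have hcl : IsClosed (⋃ k ∈ Finset.range j, Set.range fun c => A ^ k *ᵥ (B *ᵥ c)) := by
      refine isClosed_biUnion_finset fun k _ => ?_
      exact Submodule.closed_of_finiteDimensional
        (LinearMap.range ((A ^ k).mulVecLin ∘ₗ B.mulVecLin))
    have hopen := hcl.isOpen_compl
    have hxj : x ∈ (⋃ k ∈ Finset.range j, Set.range fun c => A ^ k *ᵥ (B *ᵥ c))ᶜ := fun h => by
      obtain ⟨k, _, hk⟩ := Set.mem_iUnion₂.1 h
      exact hx1 (Set.mem_iUnion.2 ⟨k, hk⟩)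
    have hnhds := Filter.inter_mem (hopen.mem_nhds hxj)
      (Metric.ball_mem_nhds x (Nat.one_div_pos_of_nat (α := ℝ) (n := j)))
    obtain ⟨y, ⟨hy1, hy2⟩, hy3⟩ := mem_closure_iff_nhds.1 (hd x) _ hnhds
    obtain ⟨k, c, rfl⟩ := Set.mem_iUnion.1 hy3
    refine ⟨k, ?_, c, by rw [dist_comm]; exact hy2⟩
    by_contra hk
    exact hy1 (Set.mem_iUnion₂.2 ⟨k, Finset.mem_range.2 (by omega), c, rfl⟩)
  choose κ hκ c hc using happ
  have hκt : Tendsto κ atTop atTop := tendsto_atTop_mono hκ tendsto_id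
  have hy : Tendsto (fun j => A ^ κ j *ᵥ (B *ᵥ c j)) atTop (𝓝 x) := by
    rw [tendsto_iff_dist_tendsto_zero]
    refine squeeze_zero (fun _ => dist_nonneg) (fun j => ?_)
      tendsto_one_div_add_atTop_nhds_zero_nat
    rw [dist_comm]
    exact (hc j).le
  -- undo the unimodular part along a subsequence
  let inv : (S → ℂ) → S → ℂ := fun g i => (starRingEnd ℂ) (g i)
  have hinv : ∀ g ∈ unimodular S, inv g ∈ unimodular S := fun g hg =>
    ⟨fun i j hij => by simp [inv, hg.1 i j hij], fun i => by simp [inv, hg.2 i]⟩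
  have hinvmul : ∀ g ∈ unimodular S, ψ (inv g) * ψ g = 1 := fun g hg => by
    rw [← hmul _ _ (hinv g hg).1 hg.1, ← h1]
    congr 1
    funext i
    simp [inv, ← Complex.normSq_eq_conj_mul_self, Complex.normSq_eq_norm_sq, hg.2 i]
  have hupow : ∀ k : ℕ, u ^ k ∈ unimodular S := fun k =>
    ⟨fun i j hij => by simp [hu.1 i j hij], fun i => by simp [hu.2 i]⟩
  obtain ⟨g, hg, φ, hφ, hlim⟩ := (isCompact_unimodular S).tendsto_subseq
    (fun j => hinv _ (hupow (κ j)))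
  have hψc : Continuous ψ := LinearMap.continuous_of_finiteDimensional ψ
  have hz : Tendsto (fun j => (R ^ κ (φ j) * B) *ᵥ c (φ j)) atTop (𝓝 (ψ g *ᵥ x)) := by
    have hcont : Continuous fun p : Matrix (Fin N) (Fin N) ℝ × (Fin N → ℝ) => p.1 *ᵥ p.2 :=
      continuous_fst.matrix_mulVec continuous_snd
    have := (hcont.tendsto (ψ g, x)).comp
      (((hψc.tendsto g).comp hlim).prodMk_nhds (hy.comp hφ.tendsto_atTop))
    refine this.congr fun j => ?_
    simp only [Function.comp_apply, hpolar, Matrix.mulVec_mulVec]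
    rw [← Matrix.mul_assoc, ← Matrix.mul_assoc, hinvmul _ (hupow _), Matrix.one_mul]
  obtain ⟨w, hw⟩ := hQ (κ ∘ φ) (c ∘ φ) _ (hκt.comp hφ.tendsto_atTop) hz
  obtain ⟨σ, t, hσ⟩ := exists_torusParam_eq hS (hinv g hg)
  refine hx2 (Set.mem_iUnion.2 ⟨σ, (t, w), ?_⟩)
  simp only [Φ]
  rw [hσ, ← hw, Matrix.mulVec_mulVec, hinvmul g hg, Matrix.one_mulVec]

/-- Reduction to `not_dense_orbit`: an `n`-supercyclic operator with `n < N` is invertible. -/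
theorem not_nSupercyclic {N n : ℕ} (hn : N / 2 + n < N)
    (T : (Fin N → ℝ) →ₗ[ℝ] (Fin N → ℝ)) : ¬ NSupercyclic n T := by
  rintro ⟨E, hE, hd⟩
  -- the orbit lies in `E ∪ range T`, a union of two closed subspaces, so `T` is onto
  have hsurj : LinearMap.range T = ⊤ := by
    by_contra hT
    have hsub : (⋃ k : ℕ, ⇑(T ^ k) '' (E : Set (Fin N → ℝ))) ⊆
        (E : Set (Fin N → ℝ)) ∪ (LinearMap.range T : Set (Fin N → ℝ)) := by
      rintro _ ⟨_, ⟨k, rfl⟩, ⟨v, hv, rfl⟩⟩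
      cases k with
      | zero => left; simpa using hv
      | succ k => right; exact ⟨(T ^ k) v, by rw [pow_succ', Module.End.mul_apply]⟩
    have hcl : IsClosed ((E : Set (Fin N → ℝ)) ∪ (LinearMap.range T : Set (Fin N → ℝ))) :=
      E.closed_of_finiteDimensional.union (LinearMap.range T).closed_of_finiteDimensional
    have huniv := (hd.mono hsub).closure_eq
    rw [hcl.closure_eq] at huniv
    have hEtop : E ≠ ⊤ := by
      rintro rfl
      rw [finrank_top, Module.finrank_fin_fun] at hE
      omega
    refine Subspace.biUnion_ne_univ_of_top_notMem (s := ({E, LinearMap.range T} : Finset _))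
      (by simp [hEtop.symm, Ne.symm hT]) ?_
    simpa using huniv
  have hinj : Function.Injective T := LinearMap.injective_iff_surjective.2
    (LinearMap.range_eq_top.1 hsurj)
  let e : (Fin n → ℝ) ≃ₗ[ℝ] E := LinearEquiv.ofFinrankEq _ _ (by simp [hE])
  let b : (Fin n → ℝ) →ₗ[ℝ] (Fin N → ℝ) := E.subtype ∘ₗ e.toLinearMap
  have hA : ∀ (k : ℕ) v, (LinearMap.toMatrix' T) ^ k *ᵥ v = (T ^ k) v := by
    intro k v
    have : (LinearMap.toMatrix' T) ^ k = LinearMap.toMatrix' (T ^ k) :=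
      (map_pow LinearMap.toMatrixAlgEquiv' T k).symm
    rw [this, LinearMap.toMatrix'_mulVec]
  refine not_dense_orbit hn (LinearMap.toMatrix' T) (fun x y h => ?_) (LinearMap.toMatrix' b)
    (fun x y h => ?_) (hd.mono ?_)
  · simp only [LinearMap.toMatrix'_mulVec] at h
    exact hinj h
  · simp only [LinearMap.toMatrix'_mulVec] at h
    exact e.injective (Subtype.val_injective h)
  · rintro _ ⟨_, ⟨k, rfl⟩, ⟨v, hv, rfl⟩⟩
    refine Set.mem_iUnion.2 ⟨k, e.symm ⟨v, hv⟩, ?_⟩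
    simp only [hA, LinearMap.toMatrix'_mulVec]
    simp [b]

theorem stmt10 (N : ℕ) (hN : 2 ≤ N) :
    (∀ T : (Fin N → ℝ) →ₗ[ℝ] (Fin N → ℝ), ¬ NSupercyclic ((N + 1) / 2 - 1) T) ∧
    (∃ T : (Fin N → ℝ) →ₗ[ℝ] (Fin N → ℝ), NSupercyclic ((N + 1) / 2) T) := by
  exact ⟨fun T => not_nSupercyclic (by omega) T, exists_nSupercyclic N⟩
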